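/- arXiv:2211.01306 — 2 statements merged into one kernel-verified Lean document; each statement's English description precedes it below -/
import Mathlib

section
/- Let K ≥ 2, τ > 0, and β ∈ ℝ^K with all β_i > 0, and let X have the Concrete distribution C(β, τ). Then for each index i, the rounding probability P[X_i = max(X_1, …, X_K)] equals β_i / ∑_{j=1}^K β_j; in particular this probability is independent of the temperature τ. Equivalently, ∫_{{x ∈ S_K : x_i ≥ x_j for all j}} f(x) d^{K−1}x = β_i / ∑_{j=1}^K β_j. -/
open MeasureTheory Finset

noncomputable def fillMap (K : ℕ) (u : Fin (K - 1) → ℝ) : Fin K → ℝ :=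
  fun i => if h : (i : ℕ) < K - 1 then u ⟨i, h⟩ else 1 - ∑ j, u j

/-- The `(K-1)`-dimensional Lebesgue measure on the probability simplex `S_K`. -/
noncomputable def simplexMeasure (K : ℕ) : Measure (Fin K → ℝ) :=
  Measure.map (fillMap K)
    (volume.restrict {u : Fin (K - 1) → ℝ | (∀ j, 0 ≤ u j) ∧ ∑ j, u j ≤ 1})

/-- The density of the Concrete distribution `C(β, τ)` on the simplex. -/
noncomputable def concreteDensity (K : ℕ) (β : Fin K → ℝ) (τ : ℝ) (x : Fin K → ℝ) : ℝ :=
  (Nat.factorial (K - 1) : ℝ) * τ ^ (K - 1) * (∑ j, β j / x j ^ τ) ^ (-(K : ℝ)) *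
    ∏ i, β i / x i ^ (τ + 1)

/-! If the `E j` are independent exponential variables of rates `β j`, then the Concrete
distribution is the law of the vector with coordinates `E j ^ (-1 / τ)`, normalized to coordinate
sum one. Normalization preserves the order of the coordinates and `t ↦ t ^ (-1 / τ)` reverses it,
so the `i`-th Concrete coordinate is maximal exactly when `E i` is the smallest of the `E j`, which
has probability `β i / ∑ j, β j`.

For the sampling identity, the `E j ^ (-1 / τ)` have Fréchet densities. Disintegrate their product
over the rays through the simplex: in the variable `s = r ^ (-τ)`, the density along the ray
through `x` is the Concrete density at `x` times a Gamma density of shape `K` and rate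
`∑ j, β j / x j ^ τ`, and the latter integrates to one. -/

open ProbabilityTheory
open scoped ENNReal

lemma lintegral_comp_rpow_Ioi {p : ℝ} (hp : p ≠ 0) (g : ℝ → ℝ≥0∞) :
    ∫⁻ x in Set.Ioi 0, ENNReal.ofReal (|p| * x ^ (p - 1)) * g (x ^ p) =
      ∫⁻ y in Set.Ioi 0, g y := by
  have image_rpow : (· ^ p) '' Set.Ioi (0 : ℝ) = Set.Ioi 0 := by
    ext y
    constructor
    · rintro ⟨x, hx, rfl⟩
      exact Real.rpow_pos_of_pos hx p
    · intro hy
      exact ⟨y ^ p⁻¹, Real.rpow_pos_of_pos hy _, Real.rpow_inv_rpow hy.le hp⟩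
  have change_of_variables := lintegral_image_eq_lintegral_abs_deriv_mul measurableSet_Ioi
    (fun x hx => (Real.hasDerivAt_rpow_const (Or.inl (ne_of_gt hx))).hasDerivWithinAt)
    ((Real.rpow_left_injOn hp).mono Set.Ioi_subset_Ici_self) g
  rw [image_rpow] at change_of_variables
  rw [change_of_variables]
  refine setLIntegral_congr_fun measurableSet_Ioi fun x hx => ?_
  simp only [abs_mul, abs_of_pos (Real.rpow_pos_of_pos hx _)]

lemma map_rpow_withDensity_restrict_Ioi {p : ℝ} (hp : p ≠ 0) (f : ℝ → ℝ≥0∞) :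
    ((volume.restrict (Set.Ioi 0)).withDensity f).map (· ^ p⁻¹) =
      (volume.restrict (Set.Ioi 0)).withDensity
        fun x => ENNReal.ofReal (|p| * x ^ (p - 1)) * f (x ^ p) := by
  ext s hs
  have hpre : MeasurableSet ((· ^ p⁻¹) ⁻¹' s : Set ℝ) := hs.preimage (by fun_prop)
  rw [Measure.map_apply (by fun_prop) hs, withDensity_apply _ hpre, withDensity_apply _ hs,
    ← lintegral_indicator hpre, ← lintegral_indicator hs, ← lintegral_comp_rpow_Ioi hp]
  refine setLIntegral_congr_fun measurableSet_Ioi fun x hx => ?_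
  have inverse : (x ^ p) ^ p⁻¹ = x := Real.rpow_rpow_inv (le_of_lt hx) hp
  by_cases hxs : x ∈ s
  · rw [Set.indicator_of_mem hxs, Set.indicator_of_mem (by rwa [Set.mem_preimage, inverse])]
  · rw [Set.indicator_of_notMem hxs, Set.indicator_of_notMem (by rwa [Set.mem_preimage, inverse]),
      mul_zero]

lemma lintegral_pi_eq_lintegral_insertNth {n : ℕ} {α : Fin (n + 1) → Type*}
    [∀ j, MeasurableSpace (α j)] (μ : ∀ j, Measure (α j)) [∀ j, SigmaFinite (μ j)]
    (i : Fin (n + 1)) {F : (∀ j, α j) → ℝ≥0∞} (hF : Measurable F) :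
    ∫⁻ y, F y ∂Measure.pi μ =
      ∫⁻ t, ∫⁻ z, F (i.insertNth t z) ∂Measure.pi (fun j => μ (i.succAbove j)) ∂μ i := by
  rw [← (measurePreserving_piFinSuccAbove μ i).symm.lintegral_comp hF]
  exact lintegral_prod _ (hF.comp (MeasurableEquiv.measurable _)).aemeasurable

lemma lintegral_pi_fin_prod {n : ℕ} {α : Fin n → Type*} [∀ j, MeasurableSpace (α j)]
    (μ : ∀ j, Measure (α j)) [∀ j, SigmaFinite (μ j)] {f : ∀ j, α j → ℝ≥0∞}
    (hf : ∀ j, Measurable (f j)) :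
    ∫⁻ y, ∏ j, f j (y j) ∂Measure.pi μ = ∏ j, ∫⁻ t, f j t ∂μ j := by
  induction n with
  | zero => simp
  | succ n ih =>
    have prod_insertNth (t : α 0) (z : ∀ j : Fin n, α j.succ) :
        ∏ j, f j ((0 : Fin (n + 1)).insertNth t z j) = f 0 t * ∏ j, f (Fin.succ j) (z j) :=
      Fin.prod_univ_succ _
    calc ∫⁻ y, ∏ j, f j (y j) ∂Measure.pi μ
        = ∫⁻ t, ∫⁻ z, f 0 t * ∏ j : Fin n, f j.succ (z j)
            ∂Measure.pi (fun j => μ j.succ) ∂μ 0 := by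
          rw [lintegral_pi_eq_lintegral_insertNth μ 0 (by fun_prop)]
          exact lintegral_congr fun t => lintegral_congr (prod_insertNth t)
      _ = ∫⁻ t, f 0 t * ∏ j : Fin n, ∫⁻ s, f j.succ s ∂μ j.succ ∂μ 0 := by
          refine lintegral_congr fun t => ?_
          rw [lintegral_const_mul _ (by fun_prop), ih _ fun j => hf _]
      _ = ∏ j, ∫⁻ t, f j t ∂μ j := by
          rw [lintegral_mul_const _ (hf 0), Fin.prod_univ_succ]

lemma lintegral_pi_fintype_prod {ι : Type*} [Fintype ι] {α : ι → Type*}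
    [∀ j, MeasurableSpace (α j)] (μ : ∀ j, Measure (α j)) [∀ j, SigmaFinite (μ j)]
    {f : ∀ j, α j → ℝ≥0∞} (hf : ∀ j, Measurable (f j)) :
    ∫⁻ y, ∏ j, f j (y j) ∂Measure.pi μ = ∏ j, ∫⁻ t, f j t ∂μ j := by
  let e := (Fintype.equivFin ι).symm
  rw [← (measurePreserving_piCongrLeft μ e).lintegral_comp (by fun_prop)]
  simp only [← e.prod_comp, MeasurableEquiv.coe_piCongrLeft, Equiv.piCongrLeft_apply_apply]
  exact lintegral_pi_fin_prod _ fun j => hf (e j)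

lemma pi_withDensity {ι : Type*} [Fintype ι] {α : ι → Type*} [∀ j, MeasurableSpace (α j)]
    (μ : ∀ j, Measure (α j)) [∀ j, SigmaFinite (μ j)] {f : ∀ j, α j → ℝ≥0∞}
    [∀ j, SigmaFinite ((μ j).withDensity (f j))] (hf : ∀ j, Measurable (f j)) :
    Measure.pi (fun j => (μ j).withDensity (f j)) =
      (Measure.pi μ).withDensity fun y => ∏ j, f j (y j) := by
  refine Measure.pi_eq fun s hs => ?_
  have indicator_prod (y : ∀ j, α j) : (Set.univ.pi s).indicator (fun y => ∏ j, f j (y j)) y =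
      ∏ j, (s j).indicator (f j) (y j) := by
    by_cases hy : y ∈ Set.univ.pi s
    · rw [Set.indicator_of_mem hy]
      exact prod_congr rfl fun j _ => (Set.indicator_of_mem (hy j trivial) _).symm
    · rw [Set.indicator_of_notMem hy]
      obtain ⟨j, hj⟩ : ∃ j, y j ∉ s j := by simpa using hy
      exact (prod_eq_zero (mem_univ j) (Set.indicator_of_notMem hj _)).symm
  rw [withDensity_apply _ (.univ_pi hs), ← lintegral_indicator (.univ_pi hs),
    lintegral_congr indicator_prod, lintegral_pi_fintype_prod μ fun j => (hf j).indicator (hs j)]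
  exact prod_congr rfl fun j _ => by
    rw [lintegral_indicator (hs j), withDensity_apply _ (hs j)]

lemma pi_setOf_forall_le {n : ℕ} (μ : Fin (n + 1) → Measure ℝ) [∀ j, SigmaFinite (μ j)]
    (i : Fin (n + 1)) :
    Measure.pi μ {y | ∀ j, y i ≤ y j} =
      ∫⁻ t, ∏ j, μ (i.succAbove j) (Set.Ici t) ∂μ i := by
  have hS : MeasurableSet {y : Fin (n + 1) → ℝ | ∀ j, y i ≤ y j} := by
    measurability
  rw [← lintegral_indicator_one hS,
    lintegral_pi_eq_lintegral_insertNth μ i (measurable_one.indicator hS)]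
  refine lintegral_congr fun t => ?_
  have section_eq (z : Fin n → ℝ) :
      {y : Fin (n + 1) → ℝ | ∀ j, y i ≤ y j}.indicator 1 (i.insertNth t z) =
        (Set.univ.pi fun _ => Set.Ici t).indicator (1 : (Fin n → ℝ) → ℝ≥0∞) z := by
    simp only [Set.indicator, Set.mem_ofPred_eq, i.forall_iff_succAbove, Fin.insertNth_apply_same,
      Fin.insertNth_apply_succAbove, le_refl, true_and, Set.mem_univ_pi, Set.mem_Ici,
      Pi.one_apply]
  rw [lintegral_congr section_eq, lintegral_indicator_one (.univ_pi fun _ => measurableSet_Ici),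
    Measure.pi_pi]

lemma expMeasure_eq_withDensity (b : ℝ) :
    expMeasure b = volume.withDensity (exponentialPDF b) :=
  rfl

lemma measurable_gammaPDF (a r : ℝ) : Measurable (gammaPDF a r) :=
  (measurable_gammaPDFReal a r).ennreal_ofReal

lemma measurable_exponentialPDF (b : ℝ) : Measurable (exponentialPDF b) :=
  measurable_gammaPDF 1 b

lemma expMeasure_Ici {b a : ℝ} (hb : 0 < b) (ha : 0 ≤ a) :
    expMeasure b (Set.Ici a) = ENNReal.ofReal (Real.exp (-(b * a))) := by
  have := isProbabilityMeasure_expMeasure hb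
  have : expMeasure b (Set.Ici a) = expMeasure b (Set.Ioi a) :=
    measure_congr ((withDensity_absolutelyContinuous _ _).ae_eq Ioi_ae_eq_Ici.symm)
  have exp_le_one : Real.exp (-(b * a)) ≤ 1 := Real.exp_le_one_iff.2 (by nlinarith)
  rw [this, ← Set.compl_Iic, prob_compl_eq_one_sub measurableSet_Iic,
    ← ofReal_cdf, cdf_expMeasure_eq hb, if_pos ha, ← ENNReal.ofReal_one,
    ← ENNReal.ofReal_sub _ (sub_nonneg.2 exp_le_one), sub_sub_cancel]

lemma pi_expMeasure_setOf_forall_le {n : ℕ} {b : Fin (n + 1) → ℝ} (hb : ∀ j, 0 < b j)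
    (i : Fin (n + 1)) :
    Measure.pi (fun j => expMeasure (b j)) {y : Fin (n + 1) → ℝ | ∀ j, y i ≤ y j} =
      ENNReal.ofReal (b i / ∑ j, b j) := by
  have (j : Fin (n + 1)) := isProbabilityMeasure_expMeasure (hb j)
  have hB : 0 < ∑ j, b j := sum_pos (fun j _ => hb j) univ_nonempty
  have density_mul_survival (t : ℝ) :
      exponentialPDF (b i) t * ∏ j, expMeasure (b (i.succAbove j)) (Set.Ici t) =
        ENNReal.ofReal (b i / ∑ j, b j) * exponentialPDF (∑ j, b j) t := by
    rcases lt_or_ge t 0 with ht | ht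
    · simp only [exponentialPDF_of_neg ht, zero_mul, mul_zero]
    · have := hb i
      simp only [expMeasure_Ici (hb _) ht, exponentialPDF_of_nonneg ht]
      rw [← ENNReal.ofReal_prod_of_nonneg fun _ _ => by positivity,
        ← ENNReal.ofReal_mul (by positivity), ← ENNReal.ofReal_mul (by positivity),
        ← Real.exp_sum, ← mul_assoc, div_mul_cancel₀ _ hB.ne', mul_assoc, ← Real.exp_add,
        Fin.sum_univ_succAbove _ i, add_mul, neg_add, sum_mul, sum_neg_distrib]
  calc Measure.pi (fun j => expMeasure (b j)) {y : Fin (n + 1) → ℝ | ∀ j, y i ≤ y j}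
    _ = ∫⁻ t, ∏ j, expMeasure (b (i.succAbove j)) (Set.Ici t) ∂expMeasure (b i) :=
        pi_setOf_forall_le _ i
    _ = ∫⁻ t, exponentialPDF (b i) t * ∏ j, expMeasure (b (i.succAbove j)) (Set.Ici t) := by
        rw [expMeasure_eq_withDensity]
        exact lintegral_withDensity_eq_lintegral_mul_non_measurable _
          (measurable_exponentialPDF _) (ae_of_all _ fun _ => ENNReal.ofReal_lt_top) _
    _ = ENNReal.ofReal (b i / ∑ j, b j) := by
        rw [lintegral_congr density_mul_survival,
          lintegral_const_mul _ (measurable_exponentialPDF _),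
          lintegral_exponentialPDF_eq_one hB, mul_one]

lemma gammaMeasure_eq_withDensity_restrict_Ioi (a r : ℝ) :
    gammaMeasure a r = (volume.restrict (Set.Ioi 0)).withDensity (gammaPDF a r) := by
  rw [gammaMeasure, ← withDensity_indicator measurableSet_Ioi]
  refine withDensity_congr_ae ?_
  filter_upwards [compl_mem_ae_iff.2 (measure_singleton (0 : ℝ))] with y hy
  rcases lt_or_gt_of_ne hy with hneg | hpos
  · rw [Set.indicator_of_notMem (show y ∉ Set.Ioi 0 from hneg.not_gt), gammaPDF_of_neg hneg]
  · rw [Set.indicator_of_mem (show y ∈ Set.Ioi 0 from hpos)]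

/-- The density of the Fréchet distribution with shape `τ` and distribution function
`t ↦ exp (-b t ^ (-τ))` on the positive half-line; it is the law of `E ^ (-1 / τ)` for an
exponential variable `E` of rate `b`. -/
noncomputable def frechetPDF (τ b : ℝ) : ℝ → ℝ≥0∞ :=
  (Set.Ioi 0).indicator fun t =>
    ENNReal.ofReal (τ * t ^ (-τ - 1) * (b * Real.exp (-(b * t ^ (-τ)))))

lemma measurable_frechetPDF (τ b : ℝ) : Measurable (frechetPDF τ b) :=
  Measurable.indicator (by fun_prop) measurableSet_Ioi

lemma map_rpow_expMeasure {τ : ℝ} (hτ : 0 < τ) (b : ℝ) :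
    (expMeasure b).map (· ^ (-τ⁻¹)) = volume.withDensity (frechetPDF τ b) := by
  rw [expMeasure, gammaMeasure_eq_withDensity_restrict_Ioi, ← inv_neg,
    map_rpow_withDensity_restrict_Ioi (neg_ne_zero.2 hτ.ne'), frechetPDF,
    withDensity_indicator measurableSet_Ioi]
  refine withDensity_congr_ae ?_
  filter_upwards [ae_restrict_mem measurableSet_Ioi] with t (ht : 0 < t)
  change _ * exponentialPDF b (t ^ (-τ)) = _
  rw [exponentialPDF_of_nonneg (by positivity), abs_neg, abs_of_pos hτ,
    ← ENNReal.ofReal_mul (by positivity)]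

lemma pi_map_rpow_expMeasure {ι : Type*} [Fintype ι] {τ : ℝ} (hτ : 0 < τ) {b : ι → ℝ}
    (hb : ∀ j, 0 < b j) :
    (Measure.pi fun j => expMeasure (b j)).map (fun y j => y j ^ (-τ⁻¹)) =
      volume.withDensity fun t => ∏ j, frechetPDF τ (b j) (t j) := by
  have (j : ι) := isProbabilityMeasure_expMeasure (hb j)
  have (j : ι) : IsProbabilityMeasure ((expMeasure (b j)).map (· ^ (-τ⁻¹))) :=
    Measure.isProbabilityMeasure_map (by fun_prop)
  have (j : ι) : IsProbabilityMeasure (volume.withDensity (frechetPDF τ (b j))) :=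
    map_rpow_expMeasure hτ (b j) ▸ inferInstance
  rw [Measure.pi_map_pi (f := fun _ y => y ^ (-τ⁻¹)) fun j => by fun_prop]
  simp only [map_rpow_expMeasure hτ]
  exact pi_withDensity _ fun j => measurable_frechetPDF τ (b j)

section Simplex

variable {n : ℕ}

lemma fillMap_eq_insertNth (u : Fin n → ℝ) :
    fillMap (n + 1) u = (Fin.last n).insertNth (1 - ∑ j, u j) u := by
  refine Fin.eq_insertNth_iff.2 ⟨by simp [fillMap], ?_⟩
  ext k
  simp [fillMap, Fin.removeNth]

lemma smul_fillMap (r : ℝ) (u : Fin n → ℝ) :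
    r • fillMap (n + 1) u = (Fin.last n).insertNth (r - ∑ j, (r • u) j) (r • u) := by
  rw [fillMap_eq_insertNth]
  refine Fin.eq_insertNth_iff.2 ⟨?_, ?_⟩
  · simp [mul_sub, mul_sum]
  · ext k
    simp [Fin.removeNth]

lemma sum_fillMap (u : Fin n → ℝ) : ∑ j, fillMap (n + 1) u j = 1 := by
  simp [fillMap_eq_insertNth, Fin.sum_univ_succAbove _ (Fin.last n)]

lemma fillMap_nonneg_iff (u : Fin n → ℝ) :
    0 ≤ fillMap (n + 1) u ↔ (∀ j, 0 ≤ u j) ∧ ∑ j, u j ≤ 1 := by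
  simp only [fillMap_eq_insertNth, Pi.le_def, (Fin.last n).forall_iff_succAbove, Pi.zero_apply,
    Fin.insertNth_apply_same, Fin.insertNth_apply_succAbove, sub_nonneg, and_comm]

lemma measurable_fillMap (K : ℕ) : Measurable (fillMap K) := by
  refine measurable_pi_iff.2 fun j => ?_
  unfold fillMap
  split_ifs <;> fun_prop

lemma lintegral_simplexMeasure {F : (Fin (n + 1) → ℝ) → ℝ≥0∞} (hF : Measurable F) :
    ∫⁻ x, F x ∂simplexMeasure (n + 1) =
      ∫⁻ u : Fin n → ℝ, (Set.Ici 0).indicator F (fillMap (n + 1) u) := by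
  have preimage_Ici : {u : Fin n → ℝ | (∀ j, 0 ≤ u j) ∧ ∑ j, u j ≤ 1} =
      fillMap (n + 1) ⁻¹' Set.Ici 0 :=
    Set.ext fun u => (fillMap_nonneg_iff u).symm
  have hpre : MeasurableSet (fillMap (n + 1) ⁻¹' Set.Ici 0) :=
    measurableSet_Ici.preimage (measurable_fillMap (n + 1))
  calc ∫⁻ x, F x ∂simplexMeasure (n + 1)
    _ = ∫⁻ u in fillMap (n + 1) ⁻¹' Set.Ici 0, F (fillMap (n + 1) u) := by
        rw [← preimage_Ici]; exact lintegral_map hF (measurable_fillMap _)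
    _ = ∫⁻ u : Fin n → ℝ, (Set.Ici 0).indicator F (fillMap (n + 1) u) :=
        (lintegral_indicator hpre _).symm

lemma ae_simplexMeasure_mem_stdSimplex :
    ∀ᵐ x ∂simplexMeasure (n + 1), x ∈ stdSimplex ℝ (Fin (n + 1)) := by
  have hmeas : MeasurableSet (stdSimplex ℝ (Fin (n + 1))) :=
    (isClosed_stdSimplex ℝ (Fin (n + 1))).measurableSet
  refine (ae_map_iff (measurable_fillMap _).aemeasurable hmeas).2 ?_
  filter_upwards [ae_restrict_mem (by measurability)] with u hu
  exact ⟨(fillMap_nonneg_iff u).2 hu, sum_fillMap u⟩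

lemma measurable_insertNth_last_sub_sum :
    Measurable fun p : ℝ × (Fin n → ℝ) =>
      ((Fin.last n).insertNth (p.1 - ∑ j, p.2 j) p.2 : Fin (n + 1) → ℝ) :=
  (MeasurableEquiv.piFinSuccAbove (fun _ : Fin (n + 1) => ℝ) (Fin.last n)).symm.measurable.comp
    (by fun_prop : Measurable fun p : ℝ × (Fin n → ℝ) => (p.1 - ∑ j, p.2 j, p.2))

lemma lintegral_eq_lintegral_slices {F : (Fin (n + 1) → ℝ) → ℝ≥0∞} (hF : Measurable F) :
    ∫⁻ y, F y =
      ∫⁻ r : ℝ, ∫⁻ u : Fin n → ℝ, F ((Fin.last n).insertNth (r - ∑ j, u j) u) := by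
  have hinsert : Measurable fun p : ℝ × (Fin n → ℝ) =>
      F ((Fin.last n).insertNth p.1 p.2) :=
    hF.comp (MeasurableEquiv.piFinSuccAbove (fun _ => ℝ) (Fin.last n)).symm.measurable
  calc ∫⁻ y, F y
    _ = ∫⁻ u : Fin n → ℝ, ∫⁻ t : ℝ, F ((Fin.last n).insertNth t u) := by
        rw [volume_pi, lintegral_pi_eq_lintegral_insertNth _ (Fin.last n) hF]
        exact lintegral_lintegral_swap hinsert.aemeasurable
    _ = ∫⁻ u : Fin n → ℝ, ∫⁻ r : ℝ, F ((Fin.last n).insertNth (r - ∑ j, u j) u) :=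
        lintegral_congr fun u => (lintegral_sub_right_eq_self _ (∑ j, u j)).symm
    _ = ∫⁻ r : ℝ, ∫⁻ u : Fin n → ℝ, F ((Fin.last n).insertNth (r - ∑ j, u j) u) :=
        lintegral_lintegral_swap
          (hF.comp (measurable_insertNth_last_sub_sum.comp measurable_swap)).aemeasurable

lemma lintegral_slice_eq_mul_lintegral_smul_fillMap {F : (Fin (n + 1) → ℝ) → ℝ≥0∞}
    (hF : Measurable F) {r : ℝ} (hr : 0 < r) :
    ∫⁻ u : Fin n → ℝ, F ((Fin.last n).insertNth (r - ∑ j, u j) u) =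
      ENNReal.ofReal (r ^ n) * ∫⁻ u : Fin n → ℝ, F (r • fillMap (n + 1) u) := by
  have hslice : Measurable fun u : Fin n → ℝ =>
      F ((Fin.last n).insertNth (r - ∑ j, u j) u) :=
    hF.comp (measurable_insertNth_last_sub_sum.comp measurable_prodMk_left)
  have scaling := Measure.map_addHaar_smul (volume : Measure (Fin n → ℝ)) hr.ne'
  rw [Module.finrank_fin_fun, abs_of_pos (by positivity)] at scaling
  simp only [smul_fillMap]
  rw [← lintegral_map hslice (measurable_const_smul r), scaling, lintegral_smul_measure,
    smul_eq_mul, ← mul_assoc, ← ENNReal.ofReal_mul (by positivity),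
    mul_inv_cancel₀ (by positivity), ENNReal.ofReal_one, one_mul]

lemma lintegral_slice_of_neg {F : (Fin (n + 1) → ℝ) → ℝ≥0∞}
    (hF : Function.support F ⊆ Set.Ici 0) {r : ℝ} (hr : r < 0) :
    ∫⁻ u : Fin n → ℝ, F ((Fin.last n).insertNth (r - ∑ j, u j) u) = 0 := by
  refine (lintegral_congr fun u => Function.notMem_support.1 fun h => ?_).trans lintegral_zero
  have sum_coord_nonneg := sum_nonneg fun j (_ : j ∈ univ) => hF h j
  simp only [Fin.sum_univ_succAbove _ (Fin.last n), Fin.insertNth_apply_same,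
    Fin.insertNth_apply_succAbove, sub_add_cancel] at sum_coord_nonneg
  exact hr.not_ge sum_coord_nonneg

lemma lintegral_eq_setLIntegral_Ioi_slices {F : (Fin (n + 1) → ℝ) → ℝ≥0∞}
    (hF : Measurable F) (hF_support : Function.support F ⊆ Set.Ici 0) :
    ∫⁻ y, F y = ∫⁻ r : ℝ in Set.Ioi 0, ∫⁻ u : Fin n → ℝ,
      F ((Fin.last n).insertNth (r - ∑ j, u j) u) := by
  have slices_support : (Function.support fun r : ℝ => ∫⁻ u : Fin n → ℝ,
      F ((Fin.last n).insertNth (r - ∑ j, u j) u)) ⊆ Set.Ici 0 := fun r hr =>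
    not_lt.1 fun hneg => hr (lintegral_slice_of_neg hF_support hneg)
  rw [lintegral_eq_lintegral_slices hF, setLIntegral_congr Ioi_ae_eq_Ici,
    setLIntegral_eq_of_support_subset slices_support]

lemma lintegral_eq_lintegral_simplexMeasure {F : (Fin (n + 1) → ℝ) → ℝ≥0∞}
    (hF : Measurable F) (hF_support : Function.support F ⊆ Set.Ici 0) :
    ∫⁻ y, F y = ∫⁻ x, (∫⁻ r : ℝ in Set.Ioi 0, ENNReal.ofReal (r ^ n) * F (r • x))
      ∂simplexMeasure (n + 1) := by
  have hradial : Measurable fun p : (Fin (n + 1) → ℝ) × ℝ =>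
      ENNReal.ofReal (p.2 ^ n) * F (p.2 • p.1) := by fun_prop
  have eq_zero_of_notMem (u : Fin n → ℝ) (hu : fillMap (n + 1) u ∉ Set.Ici 0) (r : ℝ)
      (hr : r ∈ Set.Ioi 0) : F (r • fillMap (n + 1) u) = 0 :=
    Function.notMem_support.1 fun h => hu fun j =>
      nonneg_of_mul_nonneg_right (hF_support h j) hr
  calc ∫⁻ y, F y
    _ = ∫⁻ r : ℝ in Set.Ioi 0, ∫⁻ u : Fin n → ℝ,
          F ((Fin.last n).insertNth (r - ∑ j, u j) u) :=
        lintegral_eq_setLIntegral_Ioi_slices hF hF_support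
    _ = ∫⁻ r : ℝ in Set.Ioi 0, ∫⁻ u : Fin n → ℝ,
          ENNReal.ofReal (r ^ n) * F (r • fillMap (n + 1) u) := by
        refine setLIntegral_congr_fun measurableSet_Ioi fun r hr => ?_
        rw [lintegral_slice_eq_mul_lintegral_smul_fillMap hF hr]
        exact (lintegral_const_mul _ (hF.comp ((measurable_fillMap _).const_smul r))).symm
    _ = ∫⁻ u : Fin n → ℝ, ∫⁻ r : ℝ in Set.Ioi 0,
          ENNReal.ofReal (r ^ n) * F (r • fillMap (n + 1) u) :=
        lintegral_lintegral_swap (hradial.comp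
          (((measurable_fillMap _).comp measurable_snd).prodMk measurable_fst)).aemeasurable
    _ = ∫⁻ x, (∫⁻ r : ℝ in Set.Ioi 0, ENNReal.ofReal (r ^ n) * F (r • x))
          ∂simplexMeasure (n + 1) := by
        rw [lintegral_simplexMeasure hradial.lintegral_prod_right']
        refine lintegral_congr fun u => ?_
        by_cases hu : fillMap (n + 1) u ∈ Set.Ici 0
        · rw [Set.indicator_of_mem hu]
        · rw [Set.indicator_of_notMem hu]
          exact setLIntegral_eq_zero measurableSet_Ioi fun r hr =>
            mul_eq_zero_of_right _ (eq_zero_of_notMem u hu r hr)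

/-- The radial projection of a vector with nonzero coordinate sum onto the hyperplane of
coordinate sum one; it maps nonzero vectors of the nonnegative orthant to the simplex. -/
noncomputable def normalizeSum {ι : Type*} [Fintype ι] (x : ι → ℝ) : ι → ℝ :=
  (∑ j, x j)⁻¹ • x

lemma measurable_normalizeSum {ι : Type*} [Fintype ι] :
    Measurable (normalizeSum : (ι → ℝ) → ι → ℝ) := by
  unfold normalizeSum
  fun_prop

lemma normalizeSum_smul {ι : Type*} [Fintype ι] {x : ι → ℝ} (hx : ∑ j, x j = 1) {r : ℝ}
    (hr : r ≠ 0) : normalizeSum (r • x) = x := by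
  simp only [normalizeSum, Pi.smul_apply, smul_eq_mul, ← mul_sum, hx, mul_one,
    inv_smul_smul₀ hr]

lemma normalizeSum_le_normalizeSum_iff {ι : Type*} [Fintype ι] {x : ι → ℝ} (hx : 0 < ∑ j, x j)
    (i j : ι) : normalizeSum x j ≤ normalizeSum x i ↔ x j ≤ x i :=
  mul_le_mul_iff_right₀ (inv_pos.2 hx)

lemma lintegral_indicator_preimage_normalizeSum {ι : Type*} [Fintype ι] (c : ℝ → ℝ≥0∞)
    (g : (ι → ℝ) → ℝ≥0∞) (s : Set (ι → ℝ)) {x : ι → ℝ} (hx : ∑ j, x j = 1) :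
    ∫⁻ r in Set.Ioi 0, c r * (normalizeSum ⁻¹' s).indicator g (r • x) =
      s.indicator (fun x => ∫⁻ r in Set.Ioi 0, c r * g (r • x)) x := by
  have mem_iff (r : ℝ) (hr : r ∈ Set.Ioi 0) : r • x ∈ normalizeSum ⁻¹' s ↔ x ∈ s := by
    rw [Set.mem_preimage, normalizeSum_smul hx (ne_of_gt hr)]
  by_cases hxs : x ∈ s
  · rw [Set.indicator_of_mem hxs]
    exact setLIntegral_congr_fun measurableSet_Ioi fun r hr => by
      rw [Set.indicator_of_mem ((mem_iff r hr).2 hxs)]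
  · rw [Set.indicator_of_notMem hxs]
    exact setLIntegral_eq_zero measurableSet_Ioi fun r hr => by
      rw [Set.indicator_of_notMem (mt (mem_iff r hr).1 hxs), mul_zero, Pi.zero_apply]

lemma map_normalizeSum_withDensity {g : (Fin (n + 1) → ℝ) → ℝ≥0∞} (hg : Measurable g)
    (hg_support : Function.support g ⊆ Set.Ici 0) :
    (volume.withDensity g).map normalizeSum =
      (simplexMeasure (n + 1)).withDensity fun x =>
        ∫⁻ r in Set.Ioi 0, ENNReal.ofReal (r ^ n) * g (r • x) := by
  ext s hs
  have hpre : MeasurableSet (normalizeSum ⁻¹' s : Set (Fin (n + 1) → ℝ)) :=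
    measurable_normalizeSum hs
  have indicator_support : Function.support ((normalizeSum ⁻¹' s).indicator g) ⊆ Set.Ici 0 := by
    rw [Set.support_indicator]
    exact Set.inter_subset_right.trans hg_support
  rw [Measure.map_apply measurable_normalizeSum hs, withDensity_apply _ hpre,
    withDensity_apply _ hs, ← lintegral_indicator hpre, ← lintegral_indicator hs,
    lintegral_eq_lintegral_simplexMeasure (hg.indicator hpre) indicator_support]
  exact lintegral_congr_ae <| ae_simplexMeasure_mem_stdSimplex.mono fun x hx =>
    lintegral_indicator_preimage_normalizeSum _ g s hx.2

end Simplex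

lemma setLIntegral_Ioi_gammaPDF {a r : ℝ} (ha : 0 < a) (hr : 0 < r) :
    ∫⁻ t in Set.Ioi 0, gammaPDF a r t = 1 := by
  have := isProbabilityMeasure_gammaMeasure ha hr
  rw [← setLIntegral_univ, ← withDensity_apply _ .univ,
    ← gammaMeasure_eq_withDensity_restrict_Ioi, measure_univ]

section Concrete

variable {n : ℕ} {τ : ℝ} {β : Fin (n + 1) → ℝ} {x : Fin (n + 1) → ℝ}

lemma measurable_concreteDensity {K : ℕ} (β : Fin K → ℝ) (τ : ℝ) :
    Measurable (concreteDensity K β τ) := by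
  unfold concreteDensity
  fun_prop

lemma concreteDensity_nonneg {K : ℕ} {β x : Fin K → ℝ} (hτ : 0 ≤ τ) (hβ : 0 ≤ β) (hx : 0 ≤ x) :
    0 ≤ concreteDensity K β τ x := by
  have term_nonneg (a : ℝ) (j : Fin K) : 0 ≤ β j / x j ^ a :=
    div_nonneg (hβ j) (Real.rpow_nonneg (hx j) a)
  have sum_terms_nonneg := sum_nonneg fun j (_ : j ∈ univ) => term_nonneg τ j
  have prod_terms_nonneg := prod_nonneg fun j (_ : j ∈ univ) => term_nonneg (τ + 1) j
  unfold concreteDensity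
  positivity

-- On the boundary the formula takes its value from the convention `β j / 0 = 0`.
lemma concreteDensity_eq_zero {K : ℕ} {x : Fin K → ℝ} (hτ : τ + 1 ≠ 0) (β : Fin K → ℝ)
    {j : Fin K} (hj : x j = 0) : concreteDensity K β τ x = 0 := by
  rw [concreteDensity, prod_eq_zero (mem_univ j), mul_zero]
  rw [hj, Real.zero_rpow hτ, div_zero]

lemma concreteDensity_mul_gammaPDFReal (hβ : ∀ j, 0 < β j) (hx : ∀ j, 0 < x j) {s : ℝ}
    (hs : 0 ≤ s) :
    concreteDensity (n + 1) β τ x * gammaPDFReal (n + 1) (∑ j, β j / x j ^ τ) s =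
      τ ^ n * s ^ n * (∏ j, β j / x j ^ (τ + 1)) * Real.exp (-((∑ j, β j / x j ^ τ) * s)) := by
  have hA : 0 < ∑ j, β j / x j ^ τ :=
    sum_pos (fun j _ => div_pos (hβ j) (Real.rpow_pos_of_pos (hx j) _)) univ_nonempty
  rw [concreteDensity, gammaPDFReal, if_pos hs, Real.Gamma_nat_eq_factorial, add_sub_cancel_right,
    Real.rpow_natCast, Real.rpow_neg hA.le, Nat.add_sub_cancel, Nat.cast_succ]
  field_simp

lemma prod_frechetPDF_smul (hτ : 0 < τ) (hβ : ∀ j, 0 < β j) (hx : ∀ j, 0 < x j) {r : ℝ}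
    (hr : 0 < r) :
    ENNReal.ofReal (r ^ n) * ∏ j, frechetPDF τ (β j) ((r • x) j) =
      ENNReal.ofReal (|-τ| * r ^ (-τ - 1)) * (ENNReal.ofReal (concreteDensity (n + 1) β τ x) *
        gammaPDF (n + 1) (∑ j, β j / x j ^ τ) (r ^ (-τ))) := by
  have frechetPDF_coord (j : Fin (n + 1)) : frechetPDF τ (β j) ((r • x) j) =
      ENNReal.ofReal (τ * r ^ (-τ - 1) * (β j / x j ^ (τ + 1)) *
        Real.exp (-(β j / x j ^ τ * r ^ (-τ)))) := by
    have hxj := hx j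
    rw [frechetPDF, Set.indicator_of_mem (show (r • x) j ∈ Set.Ioi 0 from mul_pos hr hxj),
      Pi.smul_apply, smul_eq_mul, Real.mul_rpow hr.le hxj.le, Real.mul_rpow hr.le hxj.le,
      ← neg_add', Real.rpow_neg hxj.le, Real.rpow_neg hxj.le]
    ring_nf
  have coord_nonneg (j : Fin (n + 1)) : 0 ≤ τ * r ^ (-τ - 1) * (β j / x j ^ (τ + 1)) *
      Real.exp (-(β j / x j ^ τ * r ^ (-τ))) := by
    have hxj := hx j
    have hβj := hβ j
    positivity
  have r_mul_rpow : r * r ^ (-τ - 1) = r ^ (-τ) := by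
    rw [Real.rpow_sub_one hr.ne', mul_div_cancel₀ _ hr.ne']
  have hf := concreteDensity_nonneg hτ.le (fun j => (hβ j).le) fun j => (hx j).le
  simp only [frechetPDF_coord]
  rw [← ENNReal.ofReal_prod_of_nonneg fun j _ => coord_nonneg j, gammaPDF,
    ← ENNReal.ofReal_mul (by positivity), ← ENNReal.ofReal_mul hf,
    ← ENNReal.ofReal_mul (by positivity), concreteDensity_mul_gammaPDFReal hβ hx (by positivity),
    prod_mul_distrib, prod_mul_distrib, prod_const, card_univ, Fintype.card_fin, ← Real.exp_sum,
    sum_neg_distrib, ← sum_mul, abs_neg, abs_of_pos hτ]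
  congr 1
  rw [← r_mul_rpow]
  ring

lemma lintegral_radial_frechetPDF (hτ : 0 < τ) (hβ : ∀ j, 0 < β j) (hx : 0 ≤ x) :
    ∫⁻ r : ℝ in Set.Ioi 0, ENNReal.ofReal (r ^ n) * ∏ j, frechetPDF τ (β j) ((r • x) j) =
      ENNReal.ofReal (concreteDensity (n + 1) β τ x) := by
  by_cases hpos : ∀ j, 0 < x j
  · have hA : 0 < ∑ j, β j / x j ^ τ :=
      sum_pos (fun j _ => div_pos (hβ j) (Real.rpow_pos_of_pos (hpos j) _)) univ_nonempty
    rw [setLIntegral_congr_fun measurableSet_Ioi fun r hr => prod_frechetPDF_smul hτ hβ hpos hr,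
      lintegral_comp_rpow_Ioi (neg_ne_zero.2 hτ.ne') fun s =>
        ENNReal.ofReal (concreteDensity (n + 1) β τ x) * gammaPDF (n + 1) _ s,
      lintegral_const_mul _ (measurable_gammaPDF _ _),
      setLIntegral_Ioi_gammaPDF (by positivity) hA, mul_one]
  · obtain ⟨j, hj⟩ : ∃ j, x j = 0 := by
      push Not at hpos
      exact hpos.imp fun j hj => hj.antisymm (hx j)
    have integrand_eq_zero (r : ℝ) :
        ENNReal.ofReal (r ^ n) * ∏ j, frechetPDF τ (β j) ((r • x) j) = 0 := by
      rw [prod_eq_zero (mem_univ j), mul_zero]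
      simp [frechetPDF, hj]
    simp only [integrand_eq_zero, lintegral_zero, concreteDensity_eq_zero (by positivity) β hj,
      ENNReal.ofReal_zero]

/-- The Concrete distribution `C(β, τ)` as a measure on `ℝ^K` carried by the simplex. -/
noncomputable def concreteMeasure (K : ℕ) (β : Fin K → ℝ) (τ : ℝ) : Measure (Fin K → ℝ) :=
  (simplexMeasure K).withDensity fun x => ENNReal.ofReal (concreteDensity K β τ x)

lemma map_normalizeSum_frechet (hτ : 0 < τ) (hβ : ∀ j, 0 < β j) :
    (volume.withDensity fun t => ∏ j, frechetPDF τ (β j) (t j)).map normalizeSum =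
      concreteMeasure (n + 1) β τ := by
  have hg : Measurable fun t : Fin (n + 1) → ℝ => ∏ j, frechetPDF τ (β j) (t j) :=
    Finset.measurable_prod _ fun j _ => (measurable_frechetPDF _ _).comp (measurable_pi_apply j)
  have support_subset :
      (Function.support fun t : Fin (n + 1) → ℝ => ∏ j, frechetPDF τ (β j) (t j)) ⊆ Set.Ici 0 := by
    refine fun t ht j => not_lt.1 fun hj => ?_
    exact ht (prod_eq_zero (mem_univ j) (Set.indicator_of_notMem hj.not_gt _))
  rw [map_normalizeSum_withDensity hg support_subset]
  exact withDensity_congr_ae <| ae_simplexMeasure_mem_stdSimplex.mono fun x hx =>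
    lintegral_radial_frechetPDF hτ hβ hx.1

lemma map_pi_expMeasure_eq_concreteMeasure (hτ : 0 < τ) (hβ : ∀ j, 0 < β j) :
    (Measure.pi fun j => expMeasure (β j)).map (fun y => normalizeSum fun j => y j ^ (-τ⁻¹)) =
      concreteMeasure (n + 1) β τ := by
  rw [← map_normalizeSum_frechet hτ hβ, ← pi_map_rpow_expMeasure hτ hβ,
    Measure.map_map measurable_normalizeSum (by fun_prop)]
  rfl

lemma ae_pi_expMeasure_pos {ι : Type*} [Fintype ι] {b : ι → ℝ} (hb : ∀ j, 0 < b j) :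
    ∀ᵐ y ∂Measure.pi fun j => expMeasure (b j), ∀ j, 0 < y j := by
  have (j : ι) := isProbabilityMeasure_expMeasure (hb j)
  refine ae_all_iff.2 fun j => (Measure.quasiMeasurePreserving_eval _ j).ae ?_
  rw [expMeasure, gammaMeasure_eq_withDensity_restrict_Ioi]
  exact (withDensity_absolutelyContinuous _ _).ae_le (ae_restrict_mem measurableSet_Ioi)

lemma concreteMeasure_setOf_forall_le (hτ : 0 < τ) (hβ : ∀ j, 0 < β j) (i : Fin (n + 1)) :
    concreteMeasure (n + 1) β τ {x | ∀ j, x j ≤ x i} = ENNReal.ofReal (β i / ∑ j, β j) := by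
  have hmeas : MeasurableSet {x : Fin (n + 1) → ℝ | ∀ j, x j ≤ x i} := by measurability
  have hmap : Measurable fun y : Fin (n + 1) → ℝ => normalizeSum fun j => y j ^ (-τ⁻¹) :=
    measurable_normalizeSum.comp (by fun_prop)
  rw [← map_pi_expMeasure_eq_concreteMeasure hτ hβ,
    Measure.map_apply hmap hmeas,
    ← pi_expMeasure_setOf_forall_le hβ i]
  refine measure_congr ?_
  filter_upwards [ae_pi_expMeasure_pos hβ] with y hy
  have hsum : 0 < ∑ j, y j ^ (-τ⁻¹) :=
    sum_pos (fun j _ => Real.rpow_pos_of_pos (hy j) _) univ_nonempty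
  refine propext (forall_congr' fun j => ?_)
  exact (normalizeSum_le_normalizeSum_iff hsum i j).trans
    (Real.rpow_le_rpow_iff_of_neg (hy j) (hy i) (neg_lt_zero.2 (inv_pos.2 hτ)))

end Concrete

/-- The rounding probability `P[X_i = max(X_1, …, X_K)]` of the Concrete distribution
equals `β_i / ∑_j β_j`, independently of the temperature `τ`. -/
theorem concrete_rounding_probability
    (K : ℕ) (hK : 2 ≤ K) (τ : ℝ) (hτ : 0 < τ)
    (β : Fin K → ℝ) (hβ : ∀ i, 0 < β i) (i : Fin K) :
    ∫ x in {x : Fin K → ℝ | ∀ j, x j ≤ x i},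
        concreteDensity K β τ x ∂(simplexMeasure K)
      = β i / ∑ j, β j := by
  obtain ⟨n, rfl⟩ : ∃ n, K = n + 1 := ⟨K - 1, by omega⟩
  have hmeas : MeasurableSet {x : Fin (n + 1) → ℝ | ∀ j, x j ≤ x i} := by measurability
  have density_nonneg : ∀ᵐ x ∂simplexMeasure (n + 1), 0 ≤ concreteDensity (n + 1) β τ x :=
    ae_simplexMeasure_mem_stdSimplex.mono fun x hx =>
      concreteDensity_nonneg hτ.le (fun j => (hβ j).le) hx.1
  rw [integral_eq_lintegral_of_nonneg_ae (ae_restrict_of_ae density_nonneg)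
      (measurable_concreteDensity β τ).aestronglyMeasurable,
    ← withDensity_apply _ hmeas]
  change (concreteMeasure (n + 1) β τ _).toReal = _
  rw [concreteMeasure_setOf_forall_le hτ hβ,
    ENNReal.toReal_ofReal (div_nonneg (hβ i).le (sum_nonneg fun j _ => (hβ j).le))]
end

section
/- Let K ≥ 2 and β ∈ ℝ^K with all β_i > 0. The (K−1)-dimensional Lebesgue measure of the subregion S_{K,i} = {y ∈ S_K : y_i/β_i ≤ y_j/β_j for all j} of the simplex equals (β_i / ∑_{j=1}^K β_j) times the (K−1)-dimensional Lebesgue measure of S_K. Consequently, if Y is uniformly distributed on S_K, then P[Y_i/β_i = min(Y_1/β_1, …, Y_K/β_K)] = β_i / ∑_{j=1}^K β_j. -/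
open MeasureTheory Finset

/-!
The region of the standard simplex on which `y i / b i` is minimal is itself a simplex: the vertex
`e i` has been moved to the normalised weight vector `b`. The linear map `x ↦ x + x i • (b - e i)`
moves this vertex and fixes the others; it preserves `∑ j, x j`, and in the coordinates of `fillMap`
it is an affine map whose linear part has determinant `1 + (b i - 1) = b i`.
-/

section MoveVertex

variable {ι 𝕜 : Type*} [DecidableEq ι]

/-- The linear map fixing every standard basis vector except the `i`-th, which it sends to `b`;
on the standard simplex, it moves the `i`-th vertex to `b`. -/
def moveVertex [CommRing 𝕜] (i : ι) (b : ι → 𝕜) : (ι → 𝕜) →ₗ[𝕜] (ι → 𝕜) :=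
  LinearMap.transvection (LinearMap.proj i) (b - Pi.single i 1)

lemma moveVertex_apply [CommRing 𝕜] (i : ι) (b x : ι → 𝕜) :
    moveVertex i b x = x + x i • (b - Pi.single i 1) :=
  rfl

lemma moveVertex_apply_self [CommRing 𝕜] (i : ι) (b x : ι → 𝕜) :
    moveVertex i b x i = x i * b i := by
  simp only [moveVertex_apply, Pi.add_apply, Pi.smul_apply, Pi.sub_apply, Pi.single_eq_same,
    smul_eq_mul]
  ring

lemma moveVertex_apply_of_ne [CommRing 𝕜] {i j : ι} (hj : j ≠ i) (b x : ι → 𝕜) :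
    moveVertex i b x j = x j + x i * b j := by
  simp [moveVertex_apply, hj]

lemma sum_sub_single [Fintype ι] [CommRing 𝕜] {b : ι → 𝕜} (hb : ∑ j, b j = 1) (i : ι) :
    ∑ j, (b - Pi.single i 1 : ι → 𝕜) j = 0 := by
  simp [hb]

lemma sum_moveVertex [Fintype ι] [CommRing 𝕜] {b : ι → 𝕜} (hb : ∑ j, b j = 1) (i : ι)
    (x : ι → 𝕜) : ∑ j, moveVertex i b x j = ∑ j, x j := by
  simp only [moveVertex_apply, Pi.add_apply, Pi.smul_apply, sum_add_distrib, ← smul_sum,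
    sum_sub_single hb, smul_zero, add_zero]

lemma moveVertex_sub_smul_sub_single [Field 𝕜] {i : ι} {b : ι → 𝕜} (hbi : b i ≠ 0) (y : ι → 𝕜) :
    moveVertex i b (y - (y i / b i) • (b - Pi.single i 1)) = y := by
  have hcoord : (y - (y i / b i) • (b - Pi.single i 1) : ι → 𝕜) i = y i / b i := by
    simp only [Pi.sub_apply, Pi.smul_apply, Pi.single_eq_same, smul_eq_mul]
    field_simp
    ring
  rw [moveVertex_apply, hcoord, sub_add_cancel]

lemma moveVertex_mem_stdSimplex [Fintype ι] [CommRing 𝕜] [PartialOrder 𝕜] [IsOrderedRing 𝕜]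
    {b : ι → 𝕜} (hb : b ∈ stdSimplex 𝕜 ι) (i : ι) {x : ι → 𝕜} (hx : x ∈ stdSimplex 𝕜 ι) :
    moveVertex i b x ∈ stdSimplex 𝕜 ι := by
  refine ⟨fun j => ?_, (sum_moveVertex hb.2 i x).trans hx.2⟩
  rcases eq_or_ne j i with rfl | hj
  · rw [moveVertex_apply_self]
    exact mul_nonneg (hx.1 j) (hb.1 j)
  · rw [moveVertex_apply_of_ne hj]
    exact add_nonneg (hx.1 j) (mul_nonneg (hx.1 i) (hb.1 j))

lemma moveVertex_mul_le_mul [CommRing 𝕜] [PartialOrder 𝕜] [IsOrderedRing 𝕜] {b : ι → 𝕜} {i : ι}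
    {x : ι → 𝕜} (hx : ∀ j, 0 ≤ x j) (hbi : 0 ≤ b i) (j : ι) :
    moveVertex i b x i * b j ≤ moveVertex i b x j * b i := by
  rcases eq_or_ne j i with rfl | hj
  · rfl
  · rw [moveVertex_apply_self, moveVertex_apply_of_ne hj, add_mul, mul_right_comm]
    exact le_add_of_nonneg_left (mul_nonneg (hx j) hbi)

variable [Fintype ι] [Field 𝕜] [LinearOrder 𝕜] [IsStrictOrderedRing 𝕜] {b : ι → 𝕜} {i : ι}

lemma sub_smul_sub_single_mem_stdSimplex (hb : ∑ j, b j = 1) (hbi : 0 < b i) {y : ι → 𝕜}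
    (hy : y ∈ stdSimplex 𝕜 ι) (hmin : ∀ j, y i * b j ≤ y j * b i) :
    y - (y i / b i) • (b - Pi.single i 1) ∈ stdSimplex 𝕜 ι := by
  refine ⟨fun j => ?_, ?_⟩
  · rcases eq_or_ne j i with rfl | hj
    · have hself : (y - (y j / b j) • (b - Pi.single j 1) : ι → 𝕜) j = y j / b j := by
        simp [mul_sub, hbi.ne']
      rw [hself]
      exact div_nonneg (hy.1 j) hbi.le
    · have hne : (y - (y i / b i) • (b - Pi.single i 1) : ι → 𝕜) j = y j - y i * b j / b i := by
        simp [hj, div_mul_eq_mul_div]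
      rw [hne, sub_nonneg, div_le_iff₀ hbi]
      exact hmin j
  · rw [← sum_moveVertex hb i, moveVertex_sub_smul_sub_single hbi.ne', hy.2]

lemma moveVertex_image_stdSimplex (hb : b ∈ stdSimplex 𝕜 ι) (hbi : 0 < b i) :
    moveVertex i b '' stdSimplex 𝕜 ι = stdSimplex 𝕜 ι ∩ {y | ∀ j, y i * b j ≤ y j * b i} := by
  ext y
  constructor
  · rintro ⟨x, hx, rfl⟩
    exact ⟨moveVertex_mem_stdSimplex hb i hx, moveVertex_mul_le_mul hx.1 hbi.le⟩
  · rintro ⟨hy, hmin⟩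
    exact ⟨_, sub_smul_sub_single_mem_stdSimplex hb.2 hbi hy hmin,
      moveVertex_sub_smul_sub_single hbi.ne' y⟩

end MoveVertex

lemma addHaar_image_add_smul {E : Type*} [NormedAddCommGroup E] [NormedSpace ℝ E]
    [FiniteDimensional ℝ E] [MeasurableSpace E] [BorelSpace E] (μ : Measure E) [μ.IsAddHaarMeasure]
    (f : E →ᵃ[ℝ] ℝ) (v : E) (s : Set E) :
    μ ((fun x => x + f x • v) '' s) = ENNReal.ofReal |1 + f.linear v| * μ s := by
  have hdecomp : (fun x => x + f x • v) =
      (fun x => x + f 0 • v) ∘ LinearMap.transvection f.linear v := by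
    funext x
    rw [Function.comp_apply, LinearMap.transvection.apply, f.decomp, Pi.add_apply, add_smul,
      add_assoc]
    simp
  rw [hdecomp, Set.image_comp, Set.image_add_right, measure_preimage_add_right,
    Measure.addHaar_image_linearMap, LinearMap.transvection.det]

section FillMap

variable {n : ℕ}

@[simp]
lemma fillMap_castSucc (u : Fin n → ℝ) (j : Fin n) : fillMap (n + 1) u j.castSucc = u j := by
  simp [fillMap]

@[simp]
lemma fillMap_last (u : Fin n → ℝ) : fillMap (n + 1) u (Fin.last n) = 1 - ∑ j, u j := by
  simp [fillMap]

/-- The coordinate map `fillMap (n + 1)` as an affine map, a parametrisation of the hyperplane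
`∑ j, y j = 1`; its inverse there is `Fin.init`. -/
noncomputable def fillAffine (n : ℕ) : (Fin n → ℝ) →ᵃ[ℝ] (Fin (n + 1) → ℝ) where
  toFun := fillMap (n + 1)
  linear := LinearMap.pi (Fin.snoc (fun j => LinearMap.proj j) (-∑ j, LinearMap.proj j))
  map_vadd' u v := by
    funext j
    refine Fin.lastCases ?_ (fun k => ?_) j
    · simp only [vadd_eq_add, fillMap_last, Pi.add_apply, sum_add_distrib, Pi.vadd_apply',
        LinearMap.pi_apply, Fin.snoc_last, LinearMap.neg_apply, LinearMap.coe_sum,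
        LinearMap.coe_proj, Finset.sum_apply, Function.eval]
      ring
    · simp

lemma fillAffine_apply (u : Fin n → ℝ) : fillAffine n u = fillMap (n + 1) u :=
  rfl

lemma fillAffine_linear_init {v : Fin (n + 1) → ℝ} (hv : ∑ j, v j = 0) :
    (fillAffine n).linear (Fin.init v) = v := by
  rw [Fin.sum_univ_castSucc] at hv
  funext j
  refine Fin.lastCases ?_ (fun k => ?_) j
  · simp [fillAffine, Fin.init, neg_eq_of_add_eq_zero_right hv]
  · simp [fillAffine, Fin.init]

lemma fillAffine_add_smul_init {v : Fin (n + 1) → ℝ} (hv : ∑ j, v j = 0) (u : Fin n → ℝ) (c : ℝ) :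
    fillAffine n (u + c • Fin.init v) = fillAffine n u + c • v :=
  calc
    fillAffine n (u + c • Fin.init v) = fillAffine n (c • Fin.init v +ᵥ u) := by
      rw [vadd_eq_add, add_comm u]
    _ = c • v + fillAffine n u := by
      rw [AffineMap.map_vadd, map_smul, fillAffine_linear_init hv, vadd_eq_add]
    _ = fillAffine n u + c • v := add_comm _ _

lemma fillAffine_init {y : Fin (n + 1) → ℝ} (hy : ∑ j, y j = 1) :
    fillAffine n (Fin.init y) = y := by
  rw [Fin.sum_univ_castSucc] at hy
  funext j
  refine Fin.lastCases ?_ (fun k => ?_) j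
  · simp [fillAffine_apply, Fin.init, ← hy]
  · simp [fillAffine_apply, Fin.init]

lemma fillAffine_injective : Function.Injective (fillAffine n) := fun u v huv => by
  funext j
  simpa [fillAffine_apply] using congrFun huv j.castSucc

lemma fillAffine_mem_stdSimplex {u : Fin n → ℝ} :
    fillAffine n u ∈ stdSimplex ℝ (Fin (n + 1)) ↔ (∀ j, 0 ≤ u j) ∧ ∑ j, u j ≤ 1 := by
  simp [fillAffine_apply, stdSimplex, Fin.sum_univ_castSucc, Fin.forall_fin_succ']

lemma moveVertex_fillAffine {b : Fin (n + 1) → ℝ} (hb : ∑ j, b j = 1) (i : Fin (n + 1))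
    (u : Fin n → ℝ) :
    moveVertex i b (fillAffine n u) =
      fillAffine n (u + fillAffine n u i • Fin.init (b - Pi.single i 1)) := by
  rw [moveVertex_apply, fillAffine_add_smul_init (sum_sub_single hb i)]

lemma fillAffine_preimage_moveVertex_image {b : Fin (n + 1) → ℝ} (hb : ∑ j, b j = 1)
    (i : Fin (n + 1)) {s : Set (Fin (n + 1) → ℝ)} (hs : ∀ y ∈ s, ∑ j, y j = 1) :
    fillAffine n ⁻¹' (moveVertex i b '' s) =
      (fun u => u + fillAffine n u i • Fin.init (b - Pi.single i 1)) ''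
        (fillAffine n ⁻¹' s) := by
  have hrange : s ⊆ Set.range (fillAffine n) := fun y hy => ⟨_, fillAffine_init (hs y hy)⟩
  conv_lhs => rw [← Set.image_preimage_eq_of_subset hrange]
  simp only [Set.image_image, moveVertex_fillAffine hb]
  rw [← Set.image_image (fillAffine n), Set.preimage_image_eq _ fillAffine_injective]

lemma volume_fillAffine_preimage_moveVertex_image {b : Fin (n + 1) → ℝ} (hb : ∑ j, b j = 1)
    (i : Fin (n + 1)) {s : Set (Fin (n + 1) → ℝ)} (hs : ∀ y ∈ s, ∑ j, y j = 1) :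
    volume (fillAffine n ⁻¹' (moveVertex i b '' s)) =
      ENNReal.ofReal |b i| * volume (fillAffine n ⁻¹' s) := by
  let coord : (Fin n → ℝ) →ᵃ[ℝ] ℝ := (LinearMap.proj i).toAffineMap.comp (fillAffine n)
  have hdet : 1 + coord.linear (Fin.init (b - Pi.single i 1)) = b i := by
    simp [coord, fillAffine_linear_init (sum_sub_single hb i)]
  rw [fillAffine_preimage_moveVertex_image hb i hs, ← hdet]
  exact addHaar_image_add_smul volume coord _ _

end FillMap

section SimplexMeasure

variable {n : ℕ}

lemma simplexMeasure_apply {s : Set (Fin (n + 1) → ℝ)} (hs : MeasurableSet s) :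
    simplexMeasure (n + 1) s =
      volume (fillAffine n ⁻¹' (stdSimplex ℝ (Fin (n + 1)) ∩ s)) := by
  have hmeas : Measurable (fillMap (n + 1)) :=
    (fillAffine n).continuous_of_finiteDimensional.measurable
  have hdomain : {u : Fin n → ℝ | (∀ j, 0 ≤ u j) ∧ ∑ j, u j ≤ 1} =
      fillAffine n ⁻¹' stdSimplex ℝ (Fin (n + 1)) :=
    Set.ext fun _ => fillAffine_mem_stdSimplex.symm
  rw [simplexMeasure, Measure.map_apply hmeas hs, Measure.restrict_apply (hmeas hs),
    Set.inter_comm, Set.preimage_inter, ← hdomain]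
  rfl

lemma simplexMeasure_setOf_mul_le_mul {b : Fin (n + 1) → ℝ} (hb : b ∈ stdSimplex ℝ (Fin (n + 1)))
    {i : Fin (n + 1)} (hbi : 0 < b i) :
    simplexMeasure (n + 1) {y | ∀ j, y i * b j ≤ y j * b i} =
      ENNReal.ofReal (b i) * simplexMeasure (n + 1) Set.univ := by
  have hmeas : MeasurableSet {y : Fin (n + 1) → ℝ | ∀ j, y i * b j ≤ y j * b i} := by
    measurability
  rw [simplexMeasure_apply hmeas, ← moveVertex_image_stdSimplex hb hbi,
    volume_fillAffine_preimage_moveVertex_image hb.2 i fun _ hy => hy.2, abs_of_pos hbi,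
    simplexMeasure_apply MeasurableSet.univ, Set.inter_univ]

end SimplexMeasure

/-- The `(K-1)`-dimensional volume of the subregion
`S_{K,i} = {y ∈ S_K : y_i/β_i ≤ y_j/β_j for all j}` of the simplex is the fraction
`β_i / ∑_j β_j` of the volume of the whole simplex; equivalently, for `Y` uniform on
`S_K`, `P[Y_i/β_i = min_j (Y_j/β_j)] = β_i / ∑_j β_j`. -/
theorem simplex_subregion_volume
    (K : ℕ) (hK : 2 ≤ K) (β : Fin K → ℝ) (hβ : ∀ i, 0 < β i) (i : Fin K) :
    simplexMeasure K {y : Fin K → ℝ | ∀ j, y i / β i ≤ y j / β j}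
      = ENNReal.ofReal (β i / ∑ j, β j) * simplexMeasure K Set.univ := by
  obtain ⟨n, rfl⟩ : ∃ n, K = n + 1 := ⟨K - 1, by omega⟩
  have hsum : 0 < ∑ j, β j := sum_pos (fun j _ => hβ j) ⟨i, mem_univ i⟩
  let b : Fin (n + 1) → ℝ := fun j => β j / ∑ k, β k
  have hb_pos : ∀ j, 0 < b j := fun j => div_pos (hβ j) hsum
  have hb : b ∈ stdSimplex ℝ (Fin (n + 1)) :=
    ⟨fun j => (hb_pos j).le, by rw [← sum_div, div_self hsum.ne']⟩
  have hregion : {y : Fin (n + 1) → ℝ | ∀ j, y i / β i ≤ y j / β j} =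
      {y | ∀ j, y i * b j ≤ y j * b i} := by
    ext y
    refine forall_congr' fun j => ?_
    rw [div_le_div_iff₀ (hβ i) (hβ j), mul_div_assoc', mul_div_assoc',
      div_le_div_iff_of_pos_right hsum]
  rw [hregion]
  exact simplexMeasure_setOf_mul_le_mul hb (hb_pos i)
end
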